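/- arXiv:2105.08183 — 2 statements merged into one kernel-verified Lean document; each statement's English description precedes it below -/
import Mathlib

section
/- For every natural number q > 2, the integer q² − q + 1 is not a power of 3. (Indeed, q² − q + 1 is odd; 3 divides q² − q + 1 if and only if 3 divides q + 1; and in that case q² − q + 1 ≡ 3 (mod 9).) -/
theorem three_dvd_sq_sub_self_add_one_iff {n : ℤ} : 3 ∣ n ^ 2 - n + 1 ↔ 3 ∣ n + 1 := by
  have complete_square : n ^ 2 - n + 1 = (n + 1) ^ 2 - 3 * n := by ring
  rw [complete_square, dvd_sub_left (dvd_mul_right 3 n),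
    Int.prime_three.dvd_pow_iff_dvd two_ne_zero]

theorem sq_sub_self_add_one_modEq_three {n : ℤ} (hn : 3 ∣ n + 1) :
    n ^ 2 - n + 1 ≡ 3 [ZMOD 9] := by
  obtain ⟨m, hm⟩ := hn
  obtain rfl : n = 3 * m - 1 := eq_sub_of_add_eq hm
  refine (Int.modEq_iff_dvd.mpr ⟨m ^ 2 - m, ?_⟩).symm
  ring

theorem not_nine_dvd_sq_sub_self_add_one (n : ℤ) : ¬ 9 ∣ n ^ 2 - n + 1 := by
  intro nine_dvd
  have three_dvd : 3 ∣ n ^ 2 - n + 1 := dvd_trans (by norm_num) nine_dvd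
  have modEq_three : n ^ 2 - n + 1 ≡ 3 [ZMOD 9] :=
    sq_sub_self_add_one_modEq_three (three_dvd_sq_sub_self_add_one_iff.mp three_dvd)
  have nine_dvd_three : (9 : ℤ) ∣ 3 := modEq_three.dvd_iff.mp nine_dvd
  norm_num at nine_dvd_three

theorem three_lt_sq_sub_self_add_one {n : ℤ} (hn : n < -1 ∨ 2 < n) : 3 < n ^ 2 - n + 1 := by
  have factors_pos : 0 < (n + 1) * (n - 2) := by
    rcases hn with hn | hn
    · exact mul_pos_of_neg_of_neg (by lia) (by lia)
    · exact mul_pos (by lia) (by lia)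
  linarith

theorem q_sq_sub_q_add_one_not_pow_three_general {n : ℤ} (hn : n < -1 ∨ 2 < n) (k : ℕ) :
    n ^ 2 - n + 1 ≠ 3 ^ k := by
  intro h
  have three_lt_pow : (3 : ℤ) ^ 1 < 3 ^ k := by
    simpa only [pow_one, h] using three_lt_sq_sub_self_add_one hn
  have two_le : 2 ≤ k := (pow_lt_pow_iff_right₀ (by norm_num)).mp three_lt_pow
  have nine_dvd_pow : (3 : ℤ) ^ 2 ∣ 3 ^ k := pow_dvd_pow 3 two_le
  exact not_nine_dvd_sq_sub_self_add_one n (h ▸ nine_dvd_pow)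

/-- For every natural number `q > 2`, the integer `q² − q + 1` is not a power of `3`. -/
theorem q_sq_sub_q_add_one_not_pow_three (q : ℕ) (hq : 2 < q) :
    ∀ k : ℕ, q ^ 2 - q + 1 ≠ 3 ^ k := by
  intro k h
  zify [Nat.le_self_pow two_ne_zero q] at h
  exact q_sq_sub_q_add_one_not_pow_three_general (.inr (mod_cast hq)) k h
end

section
/- Let G be a finite nontrivial perfect group and let Z be the center of G. Then σ(G) = σ(G/Z). -/
/-!
Proper subgroups of `G ⧸ Z` pull back to proper subgroups of `G`, so `σ(G) ≤ σ(G ⧸ Z)`. To push a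
cover of `G` forward, one needs `H Z ≠ G` for every proper subgroup `H` of `G`. If `H Z = G`, then
`H` is normalized by `H` and by `Z`, hence normal, and `G ⧸ H` is a quotient of `Z`, hence abelian;
so `H` contains the commutator subgroup, which is all of `G`.
-/

/-- The covering number `σ(G)`: the least cardinality of a set of proper subgroups of `G`
whose union is all of `G` (junk value `sInf ∅ = 0` if no such finite set exists). -/
noncomputable def coveringNumber (G : Type*) [Group G] : ℕ :=
  sInf {n : ℕ | ∃ C : Finset (Subgroup G), C.card = n ∧ (∀ H ∈ C, H ≠ ⊤) ∧
    ∀ g : G, ∃ H ∈ C, g ∈ H}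

/-- A cover of `G`: a set of proper subgroups whose union is `G`. Only finite covers are
considered, these being the ones that enter the definition of `coveringNumber`. -/
structure IsProperCover {G : Type*} [Group G] (C : Finset (Subgroup G)) : Prop where
  ne_top : ∀ H ∈ C, H ≠ ⊤
  exists_mem : ∀ g : G, ∃ H ∈ C, g ∈ H

section Covers

open Subgroup

variable {G K : Type*} [Group G] [Group K]

theorem coveringNumber_eq_sInf_card_image :
    coveringNumber G = sInf (Finset.card '' {C : Finset (Subgroup G) | IsProperCover C}) := by
  refine congrArg sInf (Set.ext fun n ↦ exists_congr fun C ↦ ?_)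
  exact ⟨fun ⟨hcard, hne, hmem⟩ ↦ ⟨⟨hne, hmem⟩, hcard⟩,
    fun ⟨hC, hcard⟩ ↦ ⟨hcard, hC.ne_top, hC.exists_mem⟩⟩

theorem IsProperCover.coveringNumber_le_card {C : Finset (Subgroup G)} (hC : IsProperCover C) :
    coveringNumber G ≤ C.card :=
  coveringNumber_eq_sInf_card_image.trans_le (Nat.sInf_le (Set.mem_image_of_mem _ hC))

theorem exists_isProperCover_card_eq_coveringNumber
    (hG : ∃ C : Finset (Subgroup G), IsProperCover C) :
    ∃ C : Finset (Subgroup G), IsProperCover C ∧ C.card = coveringNumber G := by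
  rw [coveringNumber_eq_sInf_card_image]
  exact Nat.sInf_mem (Set.Nonempty.image Finset.card hG)

theorem exists_isProperCover_of_not_isCyclic [Finite G] (hG : ¬IsCyclic G) :
    ∃ C : Finset (Subgroup G), IsProperCover C := by
  refine ⟨(Set.finite_range (zpowers : G → Subgroup G)).toFinset, ?_, fun g ↦ ?_⟩
  · simpa [isCyclic_iff_exists_zpowers_eq_top] using hG
  · exact ⟨zpowers g, by simp, mem_zpowers g⟩

open scoped Classical in
theorem IsProperCover.image_comap {D : Finset (Subgroup K)} (hD : IsProperCover D) {f : G →* K}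
    (hf : Function.Surjective f) : IsProperCover (D.image (comap f)) where
  ne_top := by
    refine Finset.forall_mem_image.2 fun H hH htop ↦ hD.ne_top H hH ?_
    exact comap_injective hf (htop.trans (comap_top f).symm)
  exists_mem g := by
    obtain ⟨H, hH, hg⟩ := hD.exists_mem (f g)
    exact ⟨_, Finset.mem_image_of_mem _ hH, hg⟩

open scoped Classical in
theorem IsProperCover.image_map {C : Finset (Subgroup G)} (hC : IsProperCover C) {f : G →* K}
    (hf : Function.Surjective f) (hne : ∀ H ∈ C, H.map f ≠ ⊤) :
    IsProperCover (C.image (map f)) where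
  ne_top := Finset.forall_mem_image.2 hne
  exists_mem := hf.forall.2 fun g ↦ by
    obtain ⟨H, hH, hg⟩ := hC.exists_mem g
    exact ⟨_, Finset.mem_image_of_mem _ hH, mem_map_of_mem f hg⟩

theorem coveringNumber_le_of_surjective (hK : ∃ D : Finset (Subgroup K), IsProperCover D)
    {f : G →* K} (hf : Function.Surjective f) : coveringNumber G ≤ coveringNumber K := by
  classical
  obtain ⟨D, hD, hcard⟩ := exists_isProperCover_card_eq_coveringNumber hK
  calc coveringNumber G ≤ (D.image (comap f)).card := (hD.image_comap hf).coveringNumber_le_card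
    _ ≤ D.card := Finset.card_image_le
    _ = coveringNumber K := hcard

theorem coveringNumber_eq_of_surjective (hG : ∃ C : Finset (Subgroup G), IsProperCover C)
    {f : G →* K} (hf : Function.Surjective f) (hmap : ∀ H : Subgroup G, H.map f = ⊤ → H = ⊤) :
    coveringNumber G = coveringNumber K := by
  classical
  obtain ⟨C, hC, hcard⟩ := exists_isProperCover_card_eq_coveringNumber hG
  have hfC : IsProperCover (C.image (map f)) :=
    hC.image_map hf fun H hH ↦ mt (hmap H) (hC.ne_top H hH)
  apply le_antisymm (coveringNumber_le_of_surjective ⟨_, hfC⟩ hf)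
  calc coveringNumber K ≤ (C.image (map f)).card := hfC.coveringNumber_le_card
    _ ≤ C.card := Finset.card_image_le
    _ = coveringNumber G := hcard

end Covers

section Perfect

open Subgroup

variable {G K : Type*} [Group G] [Group K]

theorem normal_of_sup_center_eq_top {H : Subgroup G} (h : H ⊔ center G = ⊤) : H.Normal :=
  normalizer_eq_top_iff.1 <| top_le_iff.1 <| h ▸ sup_le le_normalizer (center_le_normalizer _)

theorem commutator_le_of_sup_center_eq_top {H : Subgroup G} (h : H ⊔ center G = ⊤) :
    commutator G ≤ H :=
  have := normal_of_sup_center_eq_top h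
  Normal.commutator_le_of_self_sup_commutative_eq_top h inferInstance

theorem not_isCyclic_of_isPerfect [Nontrivial G] [Group.IsPerfect G] : ¬IsCyclic G :=
  fun _ ↦ Group.IsPerfect.not_isMulCommutative (G := G) inferInstance

theorem eq_top_of_map_eq_top_of_ker_le_center [Group.IsPerfect G] {f : G →* K}
    (hker : f.ker ≤ center G) {H : Subgroup G} (h : H.map f = ⊤) : H = ⊤ := by
  have hsup : H ⊔ f.ker = ⊤ := by rw [← comap_map_eq, h, comap_top]
  have hcenter : H ⊔ center G = ⊤ := top_le_iff.1 (hsup ▸ sup_le_sup_left hker H)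
  rw [← top_le_iff, ← Group.IsPerfect.commutator_eq_top (G := G)]
  exact commutator_le_of_sup_center_eq_top hcenter

theorem coveringNumber_eq_quotient_center_of_perfect_general [Group.IsPerfect G]
    (hG : ∃ C : Finset (Subgroup G), IsProperCover C)
    {f : G →* K} (hf : Function.Surjective f) (hker : f.ker ≤ center G) :
    coveringNumber G = coveringNumber K :=
  coveringNumber_eq_of_surjective hG hf fun _ ↦ eq_top_of_map_eq_top_of_ker_le_center hker

end Perfect

/-- **Covering number of a perfect group:** if `G` is a finite nontrivial perfect group
and `Z` is its center, then `σ(G) = σ(G/Z)`. -/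
theorem coveringNumber_eq_quotient_center_of_perfect
    (G : Type*) [Group G] [Finite G] [Nontrivial G] (hG : commutator G = ⊤) :
    coveringNumber G = coveringNumber (G ⧸ Subgroup.center G) := by
  have : Group.IsPerfect G := ⟨hG⟩
  exact coveringNumber_eq_quotient_center_of_perfect_general
    (exists_isProperCover_of_not_isCyclic not_isCyclic_of_isPerfect)
    (QuotientGroup.mk'_surjective _) (QuotientGroup.ker_mk' _).le
end
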